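/- arXiv:1010.1969 — 3 statements merged into one kernel-verified Lean document; each statement's English description precedes it below -/
import Mathlib

section
/- Let H : ℝ^d × ℝ^d → ℝ be smooth, (Q,P) the jointly smooth Hamiltonian flow with Hamiltonian H on [0,T], and S the associated action with ∂_t S = P·∂_P H(Q,P) − H(Q,P), S(0,q,p) = 0. Fix t ∈ [0,T] and x, y ∈ ℝ^d, and define Φ(t,x,y,q,p) = S(t,q,p) + (i/2)|x − Q(t,q,p)|² + P(t,q,p)·(x − Q(t,q,p)) + (i/2)|y − q|² − p·(y − q). Then for all (q,p) and all k = 1,…,d: i (∂_{q_k} − i ∂_{p_k}) Φ = Σ_{j=1}^d Z_{kj} (x_j − Q_j(t,q,p)), where Z_{kj} = (∂_{q_k} − i ∂_{p_k})(Q_j + i P_j)(t,q,p). -/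
noncomputable section

/-- The frozen Gaussian phase `Φ(t,x,y,·,·)` as a function of `(q,p)`, with `t, x, y` fixed. -/
def Phi3 (d : ℕ) (S : ℝ × (Fin d → ℝ) × (Fin d → ℝ) → ℝ)
    (Q P : ℝ × (Fin d → ℝ) × (Fin d → ℝ) → Fin d → ℝ)
    (t : ℝ) (x y : Fin d → ℝ) (w : (Fin d → ℝ) × (Fin d → ℝ)) : ℂ :=
  (S (t, w.1, w.2) : ℂ)
    + (Complex.I / 2) * ((∑ j, (x j - Q (t, w.1, w.2) j) ^ 2 : ℝ) : ℂ)
    + ((∑ j, P (t, w.1, w.2) j * (x j - Q (t, w.1, w.2) j) : ℝ) : ℂ)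
    + (Complex.I / 2) * ((∑ j, (y j - w.1 j) ^ 2 : ℝ) : ℂ)
    - ((∑ j, w.2 j * (y j - w.1 j) : ℝ) : ℂ)

theorem aux_line {E F : Type*} [NormedAddCommGroup E] [NormedSpace ℝ E]
    [NormedAddCommGroup F] [NormedSpace ℝ F] {f : E → F} {z : E}
    (hf : DifferentiableAt ℝ f z) (v : E) :
    HasDerivAt (fun s : ℝ => f (z + s • v)) (fderiv ℝ f z v) 0 := by
  have h1 : HasDerivAt (fun s : ℝ => z + s • v) v 0 := by
    simpa using ((hasDerivAt_id (0:ℝ)).smul_const v).const_add z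
  have h2 : HasFDerivAt f (fderiv ℝ f z) (z + (0:ℝ) • v) := by
    simpa using hf.hasFDerivAt
  exact h2.comp_hasDerivAt (0:ℝ) h1

theorem aux_time {F X : Type*} [NormedAddCommGroup X] [NormedSpace ℝ X]
    [NormedAddCommGroup F] [NormedSpace ℝ F] {f : ℝ × X → F} {t : ℝ} {w : X}
    (hf : DifferentiableAt ℝ f (t, w)) :
    HasDerivAt (fun s : ℝ => f (s, w)) (fderiv ℝ f (t, w) (1, 0)) t := by
  have h1 : HasDerivAt (fun s : ℝ => (s, w)) ((1:ℝ), (0:X)) t :=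
    (hasDerivAt_id t).prodMk (hasDerivAt_const t w)
  exact hf.hasFDerivAt.comp_hasDerivAt t h1

theorem aux_smooth {E F : Type*} [NormedAddCommGroup E] [NormedSpace ℝ E]
    [NormedAddCommGroup F] [NormedSpace ℝ F] {f : E → F}
    (hf : ContDiff ℝ (⊤ : ℕ∞) f) (u : E) :
    Differentiable ℝ (fun z => fderiv ℝ f z u) := by
  have h : ContDiff ℝ 1 (fderiv ℝ f) := hf.fderiv_right (by norm_cast)
  exact (h.differentiable (by simp)).clm_apply (differentiable_const u)

theorem aux_symm {E F : Type*} [NormedAddCommGroup E] [NormedSpace ℝ E]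
    [NormedAddCommGroup F] [NormedSpace ℝ F] {f : E → F}
    (hf : ContDiff ℝ (⊤ : ℕ∞) f) (z u v : E) :
    fderiv ℝ (fun z => fderiv ℝ f z u) z v = fderiv ℝ (fun z => fderiv ℝ f z v) z u := by
  have h : ContDiff ℝ 1 (fderiv ℝ f) := hf.fderiv_right (by norm_cast)
  have hd : DifferentiableAt ℝ (fderiv ℝ f) z := (h.differentiable (by simp)) z
  have hs : IsSymmSndFDerivAt ℝ f z :=
    hf.contDiffAt.isSymmSndFDerivAt (by simp; norm_cast)
  have key : ∀ a b : E, fderiv ℝ (fun z => fderiv ℝ f z a) z b = fderiv ℝ (fderiv ℝ f) z b a := by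
    intro a b
    rw [fderiv_clm_apply hd (differentiableAt_const a)]
    simp
  rw [key, key]
  exact hs.eq _ _

theorem aux_decomp {d : ℕ} (L : (Fin d → ℝ) × (Fin d → ℝ) →L[ℝ] ℝ) (a b : Fin d → ℝ) :
    L (a, b) = ∑ j, (a j * L (Pi.single j 1, 0) + b j * L (0, Pi.single j 1)) := by
  have hs : ∀ j : Fin d, (fun i => if j = i then (1:ℝ) else 0) = Pi.single j 1 := by
    intro j
    funext i
    simp [Pi.single_apply, eq_comm]
  have ha : L (a, 0) = ∑ j, a j * L (Pi.single j 1, 0) := by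
    have := LinearMap.pi_apply_eq_sum_univ
      ((L.comp (ContinuousLinearMap.inl ℝ (Fin d → ℝ) (Fin d → ℝ))).toLinearMap) a
    rw [show (a, (0 : Fin d → ℝ)) = ContinuousLinearMap.inl ℝ (Fin d → ℝ) (Fin d → ℝ) a from rfl]
    refine this.trans (Finset.sum_congr rfl (fun j _ => ?_))
    rw [smul_eq_mul, ← hs j]
    rfl
  have hb : L (0, b) = ∑ j, b j * L (0, Pi.single j 1) := by
    have := LinearMap.pi_apply_eq_sum_univ
      ((L.comp (ContinuousLinearMap.inr ℝ (Fin d → ℝ) (Fin d → ℝ))).toLinearMap) b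
    refine this.trans (Finset.sum_congr rfl (fun j _ => ?_))
    rw [smul_eq_mul, ← hs j]
    rfl
  rw [Finset.sum_add_distrib, ← ha, ← hb, ← map_add]
  simp

theorem aux_action (d : ℕ) (T : ℝ)
    (H : (Fin d → ℝ) × (Fin d → ℝ) → ℝ)
    (Q P : ℝ × (Fin d → ℝ) × (Fin d → ℝ) → Fin d → ℝ)
    (S : ℝ × (Fin d → ℝ) × (Fin d → ℝ) → ℝ)
    (hH : ContDiff ℝ (⊤ : ℕ∞) H)
    (hQ : ContDiff ℝ (⊤ : ℕ∞) Q) (hP : ContDiff ℝ (⊤ : ℕ∞) P) (hS : ContDiff ℝ (⊤ : ℕ∞) S)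
    (hQt : ∀ t ∈ Set.Icc (0:ℝ) T, ∀ q p : Fin d → ℝ, ∀ j : Fin d,
      fderiv ℝ Q (t, q, p) (1, 0, 0) j
        = fderiv ℝ H (Q (t, q, p), P (t, q, p)) (0, Pi.single j 1))
    (hPt : ∀ t ∈ Set.Icc (0:ℝ) T, ∀ q p : Fin d → ℝ, ∀ j : Fin d,
      fderiv ℝ P (t, q, p) (1, 0, 0) j
        = - fderiv ℝ H (Q (t, q, p), P (t, q, p)) (Pi.single j 1, 0))
    (hQ0 : ∀ q p : Fin d → ℝ, Q (0, q, p) = q)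
    (hP0 : ∀ q p : Fin d → ℝ, P (0, q, p) = p)
    (hSt : ∀ t ∈ Set.Icc (0:ℝ) T, ∀ q p : Fin d → ℝ,
      fderiv ℝ S (t, q, p) (1, 0, 0)
        = (∑ j, P (t, q, p) j * fderiv ℝ H (Q (t, q, p), P (t, q, p)) (0, Pi.single j 1))
          - H (Q (t, q, p), P (t, q, p)))
    (hS0 : ∀ q p : Fin d → ℝ, S (0, q, p) = 0)
    (t : ℝ) (ht : t ∈ Set.Icc (0:ℝ) T) (q p a b : Fin d → ℝ) :
    fderiv ℝ S (t, q, p) (0, a, b)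
      = (∑ j, P (t, q, p) j * fderiv ℝ Q (t, q, p) (0, a, b) j) - ∑ j, p j * a j := by
  have dH : Differentiable ℝ H := hH.differentiable (by simp)
  have dQ : Differentiable ℝ Q := hQ.differentiable (by simp)
  have dP : Differentiable ℝ P := hP.differentiable (by simp)
  have dS : Differentiable ℝ S := hS.differentiable (by simp)
  -- the second derivative identity
  have key : ∀ r ∈ Set.Icc (0:ℝ) T,
      fderiv ℝ (fun z => fderiv ℝ S z (0, a, b)) (r, q, p) (1, 0, 0)
      = ∑ j, (fderiv ℝ P (r, q, p) (1, 0, 0) j * fderiv ℝ Q (r, q, p) (0, a, b) j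
        + P (r, q, p) j *
          fderiv ℝ (fun z => fderiv ℝ Q z (0, a, b)) (r, q, p) (1, 0, 0) j) := by
    intro r hr
    rw [aux_symm hS, aux_symm hQ]
    have e1 := aux_line (aux_smooth hS (1, 0, 0) (r, q, p)) (0, a, b)
    have eQ := aux_line (dQ (r, q, p)) (0, a, b)
    have eP := aux_line (dP (r, q, p)) (0, a, b)
    have eQ' := aux_line (aux_smooth hQ (1, 0, 0) (r, q, p)) (0, a, b)
    have eH : HasDerivAt (fun s : ℝ => H (Q ((r, q, p) + s • (0, a, b)), P ((r, q, p) + s • (0, a, b))))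
        (fderiv ℝ H (Q (r, q, p), P (r, q, p))
          (fderiv ℝ Q (r, q, p) (0, a, b), fderiv ℝ P (r, q, p) (0, a, b))) 0 := by
      have h2 : HasFDerivAt H (fderiv ℝ H (Q (r, q, p), P (r, q, p)))
          (Q ((r, q, p) + (0:ℝ) • (0, a, b)), P ((r, q, p) + (0:ℝ) • (0, a, b))) := by
        simpa using (dH (Q (r, q, p), P (r, q, p))).hasFDerivAt
      exact h2.comp_hasDerivAt (0:ℝ) (eQ.prodMk eP)
    have e2 := (HasDerivAt.fun_sum (u := Finset.univ) (fun j _ =>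
      ((hasDerivAt_pi.1 eP) j).mul ((hasDerivAt_pi.1 eQ') j))).sub eH
    have e3 := e1.unique (e2.congr_of_eventuallyEq (Filter.Eventually.of_forall (fun s => by
      have := hSt r hr (q + s • a) (p + s • b)
      simp only [← hQt r hr] at this
      simpa using this)))
    rw [e3, aux_decomp, ← Finset.sum_sub_distrib]
    refine Finset.sum_congr rfl (fun j _ => ?_)
    rw [← hQt r hr, hPt r hr]
    simp
    ring
  let G : ℝ → ℝ := fun r => fderiv ℝ S (r, q, p) (0, a, b)
      - ∑ j, P (r, q, p) j * fderiv ℝ Q (r, q, p) (0, a, b) j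
  have hG : ∀ r ∈ Set.Icc (0:ℝ) T, HasDerivAt G 0 r := by
    intro r hr
    have e1 := aux_time (aux_smooth hS (0, a, b) (r, q, p))
    have eP := aux_time (dP (r, q, p))
    have eQ' := aux_time (aux_smooth hQ (0, a, b) (r, q, p))
    have := e1.sub (HasDerivAt.fun_sum (u := Finset.univ) (fun j _ =>
      ((hasDerivAt_pi.1 eP) j).mul ((hasDerivAt_pi.1 eQ') j)))
    have h0 := (sub_eq_zero.2 (key r hr)).symm
    rw [h0]
    exact this
  have hconst : G t = G 0 :=
    constant_of_has_deriv_right_zero (fun r hr => (hG r hr).continuousAt.continuousWithinAt)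
      (fun r hr => (hG r ⟨hr.1, hr.2.le⟩).hasDerivWithinAt) t ht
  have hG0 : G 0 = - ∑ j, p j * a j := by
    have s0 : fderiv ℝ S (0, q, p) (0, a, b) = 0 := by
      refine (aux_line (dS (0, q, p)) (0, a, b)).unique ?_
      simpa [hS0] using hasDerivAt_const (0:ℝ) (0:ℝ)
    have q0 : fderiv ℝ Q (0, q, p) (0, a, b) = a := by
      refine (aux_line (dQ (0, q, p)) (0, a, b)).unique ?_
      simpa [hQ0] using ((hasDerivAt_id (0:ℝ)).smul_const a).const_add q
    simp only [G, s0, q0, hP0, zero_sub]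
  have := hconst.trans hG0
  simp only [G] at this
  linarith

theorem aux_phi (d : ℕ)
    (Q P : ℝ × (Fin d → ℝ) × (Fin d → ℝ) → Fin d → ℝ)
    (S : ℝ × (Fin d → ℝ) × (Fin d → ℝ) → ℝ)
    (dQ : Differentiable ℝ Q) (dP : Differentiable ℝ P) (dS : Differentiable ℝ S)
    (t : ℝ) (x y q p a b : Fin d → ℝ)
    (hact : fderiv ℝ S (t, q, p) (0, a, b)
      = (∑ j, P (t, q, p) j * fderiv ℝ Q (t, q, p) (0, a, b) j) - ∑ j, p j * a j) :
    fderiv ℝ (Phi3 d S Q P t x y) (q, p) (a, b)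
      = ∑ j, (((fderiv ℝ P (t, q, p) (0, a, b) j : ℝ) : ℂ)
          - Complex.I * ((fderiv ℝ Q (t, q, p) (0, a, b) j : ℝ) : ℂ)) * ((x j : ℂ) - (Q (t, q, p) j : ℂ))
        - Complex.I * ∑ j, ((y j : ℂ) - q j) * ((a j : ℂ) - Complex.I * b j) := by
  have hd : DifferentiableAt ℝ (Phi3 d S Q P t x y) (q, p) := by
    have c : ∀ f : (Fin d → ℝ) × (Fin d → ℝ) → ℝ, Differentiable ℝ f →
        Differentiable ℝ (fun w => (f w : ℂ)) := fun f hf =>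
      Complex.ofRealCLM.differentiable.comp hf
    have hQ' : ∀ j, Differentiable ℝ (fun w : (Fin d → ℝ) × (Fin d → ℝ) => Q (t, w.1, w.2) j) :=
      fun j => by fun_prop
    have hP' : ∀ j, Differentiable ℝ (fun w : (Fin d → ℝ) × (Fin d → ℝ) => P (t, w.1, w.2) j) :=
      fun j => by fun_prop
    unfold Phi3
    refine Differentiable.differentiableAt ?_
    refine ((((c _ ?_).add ((c _ ?_).const_mul _)).add (c _ ?_)).add ((c _ ?_).const_mul _)).sub (c _ ?_)
    all_goals fun_prop
  refine (aux_line hd (a, b)).unique ?_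
  have eS := aux_line (dS (t, q, p)) (0, a, b)
  have eQ := hasDerivAt_pi.1 (aux_line (dQ (t, q, p)) (0, a, b))
  have eP := hasDerivAt_pi.1 (aux_line (dP (t, q, p)) (0, a, b))
  have ea : ∀ j, HasDerivAt (fun s : ℝ => q j + s * a j) (a j) 0 := fun j => by
    simpa using ((hasDerivAt_id (0:ℝ)).mul_const (a j)).const_add (q j)
  have eb : ∀ j, HasDerivAt (fun s : ℝ => p j + s * b j) (b j) 0 := fun j => by
    simpa using ((hasDerivAt_id (0:ℝ)).mul_const (b j)).const_add (p j)
  have f1 := HasDerivAt.fun_sum (u := Finset.univ) (fun j _ => ((eQ j).const_sub (x j)).fun_pow 2)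
  have f2 := HasDerivAt.fun_sum (u := Finset.univ) (fun j _ => (eP j).fun_mul ((eQ j).const_sub (x j)))
  have f3 := HasDerivAt.fun_sum (u := Finset.univ) (fun j _ => ((ea j).const_sub (y j)).fun_pow 2)
  have f4 := HasDerivAt.fun_sum (u := Finset.univ) (fun j _ => (eb j).fun_mul ((ea j).const_sub (y j)))
  have F := (((eS.ofReal_comp.fun_add (f1.ofReal_comp.const_mul (Complex.I / 2))).fun_add
    f2.ofReal_comp).fun_add (f3.ofReal_comp.const_mul (Complex.I / 2))).fun_sub f4.ofReal_comp
  convert F using 1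
  · funext s
    simp [Phi3]
  · rw [hact]
    push_cast
    simp only [Finset.mul_sum, ← Finset.sum_add_distrib, ← Finset.sum_sub_distrib]
    refine Finset.sum_congr rfl (fun j _ => ?_)
    simp
    ring_nf
    simp
    ring

theorem aux_QP (d : ℕ)
    (Q P : ℝ × (Fin d → ℝ) × (Fin d → ℝ) → Fin d → ℝ)
    (dQ : Differentiable ℝ Q) (dP : Differentiable ℝ P) 
    (t : ℝ) (q p a b : Fin d → ℝ) (j : Fin d) :
    fderiv ℝ (fun w : (Fin d → ℝ) × (Fin d → ℝ) =>
              ((Q (t, w.1, w.2) j : ℝ) : ℂ) + Complex.I * ((P (t, w.1, w.2) j : ℝ) : ℂ))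
              (q, p) (a, b)
      = ((fderiv ℝ Q (t, q, p) (0, a, b) j : ℝ) : ℂ)
        + Complex.I * ((fderiv ℝ P (t, q, p) (0, a, b) j : ℝ) : ℂ) := by
  have c : ∀ f : (Fin d → ℝ) × (Fin d → ℝ) → ℝ, Differentiable ℝ f →
        Differentiable ℝ (fun w => (f w : ℂ)) := fun f hf =>
      Complex.ofRealCLM.differentiable.comp hf
  have hd : Differentiable ℝ (fun w : (Fin d → ℝ) × (Fin d → ℝ) =>
              ((Q (t, w.1, w.2) j : ℝ) : ℂ) + Complex.I * ((P (t, w.1, w.2) j : ℝ) : ℂ)) := by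
    refine (c _ ?_).add ((c _ ?_).const_mul _)
    all_goals fun_prop
  refine (aux_line (hd (q, p)) (a, b)).unique ?_
  have eQ := hasDerivAt_pi.1 (aux_line (dQ (t, q, p)) (0, a, b)) j
  have eP := hasDerivAt_pi.1 (aux_line (dP (t, q, p)) (0, a, b)) j
  have F := eQ.ofReal_comp.fun_add (eP.ofReal_comp.const_mul Complex.I)
  convert F using 1
  funext s
  simp

/-- For the frozen Gaussian phase `Φ` built from the Hamiltonian flow `(Q,P)`
and action `S`, one has `i ∂_{z_k} Φ = Σ_j Z_{kj} (x_j − Q_j)` with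
`Z_{kj} = ∂_{z_k}(Q_j + iP_j)` and `∂_{z_k} = ∂_{q_k} − i ∂_{p_k}`. -/
theorem stmt_3 (d : ℕ) (T : ℝ) (hT : 0 < T)
    (H : (Fin d → ℝ) × (Fin d → ℝ) → ℝ)
    (Q P : ℝ × (Fin d → ℝ) × (Fin d → ℝ) → Fin d → ℝ)
    (S : ℝ × (Fin d → ℝ) × (Fin d → ℝ) → ℝ)
    (hH : ContDiff ℝ (⊤ : ℕ∞) H)
    (hQ : ContDiff ℝ (⊤ : ℕ∞) Q) (hP : ContDiff ℝ (⊤ : ℕ∞) P) (hS : ContDiff ℝ (⊤ : ℕ∞) S)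
    (hQt : ∀ t ∈ Set.Icc (0:ℝ) T, ∀ q p : Fin d → ℝ, ∀ j : Fin d,
      fderiv ℝ Q (t, q, p) (1, 0, 0) j
        = fderiv ℝ H (Q (t, q, p), P (t, q, p)) (0, Pi.single j 1))
    (hPt : ∀ t ∈ Set.Icc (0:ℝ) T, ∀ q p : Fin d → ℝ, ∀ j : Fin d,
      fderiv ℝ P (t, q, p) (1, 0, 0) j
        = - fderiv ℝ H (Q (t, q, p), P (t, q, p)) (Pi.single j 1, 0))
    (hQ0 : ∀ q p : Fin d → ℝ, Q (0, q, p) = q)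
    (hP0 : ∀ q p : Fin d → ℝ, P (0, q, p) = p)
    (hSt : ∀ t ∈ Set.Icc (0:ℝ) T, ∀ q p : Fin d → ℝ,
      fderiv ℝ S (t, q, p) (1, 0, 0)
        = (∑ j, P (t, q, p) j * fderiv ℝ H (Q (t, q, p), P (t, q, p)) (0, Pi.single j 1))
          - H (Q (t, q, p), P (t, q, p)))
    (hS0 : ∀ q p : Fin d → ℝ, S (0, q, p) = 0)
    (t : ℝ) (ht : t ∈ Set.Icc (0:ℝ) T) (x y : Fin d → ℝ) :
    ∀ q p : Fin d → ℝ, ∀ k : Fin d,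
      Complex.I * (fderiv ℝ (Phi3 d S Q P t x y) (q, p) (Pi.single k 1, 0)
          - Complex.I * fderiv ℝ (Phi3 d S Q P t x y) (q, p) (0, Pi.single k 1))
      = ∑ j, (fderiv ℝ (fun w : (Fin d → ℝ) × (Fin d → ℝ) =>
              ((Q (t, w.1, w.2) j : ℝ) : ℂ) + Complex.I * ((P (t, w.1, w.2) j : ℝ) : ℂ))
              (q, p) (Pi.single k 1, 0)
            - Complex.I * fderiv ℝ (fun w : (Fin d → ℝ) × (Fin d → ℝ) =>
              ((Q (t, w.1, w.2) j : ℝ) : ℂ) + Complex.I * ((P (t, w.1, w.2) j : ℝ) : ℂ))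
              (q, p) (0, Pi.single k 1))
          * (((x j : ℝ) : ℂ) - ((Q (t, q, p) j : ℝ) : ℂ)) := by
  intro q p k
  have dQ : Differentiable ℝ Q := hQ.differentiable (by simp)
  have dP : Differentiable ℝ P := hP.differentiable (by simp)
  have dS : Differentiable ℝ S := hS.differentiable (by simp)
  have act := aux_action d T H Q P S hH hQ hP hS hQt hPt hQ0 hP0 hSt hS0 t ht q p
  rw [aux_phi d Q P S dQ dP dS t x y q p _ _ (act _ _),
    aux_phi d Q P S dQ dP dS t x y q p _ _ (act _ _)]
  simp only [aux_QP d Q P dQ dP]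
  simp only [Finset.mul_sum, ← Finset.sum_sub_distrib]
  refine Finset.sum_congr rfl (fun j _ => ?_)
  have hI : Complex.I ^ 2 = -1 := Complex.I_sq
  simp only [Pi.zero_apply, Complex.ofReal_zero]
  generalize ((Pi.single k 1 : Fin d → ℝ) j) = e
  generalize (fderiv ℝ Q (t, q, p) (0, Pi.single k 1, 0) j) = A
  generalize (fderiv ℝ Q (t, q, p) (0, 0, Pi.single k 1) j) = B
  generalize (fderiv ℝ P (t, q, p) (0, Pi.single k 1, 0) j) = C
  generalize (fderiv ℝ P (t, q, p) (0, 0, Pi.single k 1) j) = D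
  generalize Complex.I = i at *
  grind
end
end

section
/- Let d ≥ 1, ε > 0, x ∈ ℝ^d. Let Q, P : ℝ^{2d} → ℝ^d and S : ℝ^{2d} → ℝ be smooth functions of (q,p), all of whose derivatives have at most polynomial growth, and define Φ(y,q,p) = S(q,p) + (i/2)|x − Q(q,p)|² + P(q,p)·(x − Q(q,p)) + (i/2)|y − q|² − p·(y − q). Assume the complex matrix Z(q,p) with entries Z_{kj} = (∂_{q_k} − i∂_{p_k})(Q_j + iP_j) satisfies i(∂_{q_k} − i∂_{p_k})Φ = Σ_j Z_{kj}(x_j − Q_j) for all (y,q,p), is invertible for every (q,p), and that all entries of Z^{-1} together with all their derivatives have at most polynomial growth. Then for every Schwartz matrix-valued function G : ℝ^{3d} → ℂ^{d×d} of (y,q,p): ∫_{ℝ^{3d}} Σ_{j,k} (x_j − Q_j) G_{jk} (x_k − Q_k) e^{iΦ/ε} dy dq dp = ∫_{ℝ^{3d}} [ ε Σ_{j,k,n} (∂_{z_n} Q_j) G_{jk} Z^{-1}_{kn} + ε² Σ_{j,k,n,r} ∂_{z_r}( ∂_{z_n}( G_{jk} Z^{-1}_{kn} ) Z^{-1}_{jr}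 ) ] e^{iΦ/ε} dy dq dp, where ∂_{z_k} = ∂_{q_k} − i∂_{p_k} acts in (q,p) at fixed y. -/
open MeasureTheory

noncomputable section

/-- The frozen Gaussian phase `Φ(y,q,p)` (with `x` fixed), on the triple space `(y,q,p)`. -/
def FGAphase (d : ℕ) (x : Fin d → ℝ)
    (S : (Fin d → ℝ) × (Fin d → ℝ) → ℝ)
    (Q P : (Fin d → ℝ) × (Fin d → ℝ) → Fin d → ℝ)
    (w : (Fin d → ℝ) × (Fin d → ℝ) × (Fin d → ℝ)) : ℂ :=
  (S (w.2.1, w.2.2) : ℂ)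
    + (Complex.I / 2) * ((∑ j, (x j - Q (w.2.1, w.2.2) j) ^ 2 : ℝ) : ℂ)
    + ((∑ j, P (w.2.1, w.2.2) j * (x j - Q (w.2.1, w.2.2) j) : ℝ) : ℂ)
    + (Complex.I / 2) * ((∑ j, (w.1 j - w.2.1 j) ^ 2 : ℝ) : ℂ)
    - ((∑ j, w.2.2 j * (w.1 j - w.2.1 j) : ℝ) : ℂ)

/-- The entries `Z_{kj} = ∂_{z_k}(Q_j + iP_j)`, `∂_{z_k} = ∂_{q_k} − i∂_{p_k}`. -/
def Zentry (d : ℕ) (Q P : (Fin d → ℝ) × (Fin d → ℝ) → Fin d → ℝ)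
    (w : (Fin d → ℝ) × (Fin d → ℝ)) (k j : Fin d) : ℂ :=
  (fderiv ℝ (fun v => ((Q v j : ℝ) : ℂ) + Complex.I * ((P v j : ℝ) : ℂ)) w (Pi.single k 1, 0))
    - Complex.I *
      (fderiv ℝ (fun v => ((Q v j : ℝ) : ℂ) + Complex.I * ((P v j : ℝ) : ℂ)) w (0, Pi.single k 1))

/-- `∂_{z_n} Q_j` (as a complex number), `∂_{z_n} = ∂_{q_n} − i∂_{p_n}`. -/
def dzQ (d : ℕ) (Q : (Fin d → ℝ) × (Fin d → ℝ) → Fin d → ℝ)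
    (w : (Fin d → ℝ) × (Fin d → ℝ)) (n j : Fin d) : ℂ :=
  fderiv ℝ (fun v => ((Q v j : ℝ) : ℂ)) w (Pi.single n 1, 0)
    - Complex.I * fderiv ℝ (fun v => ((Q v j : ℝ) : ℂ)) w (0, Pi.single n 1)

/-- `∂_{z_k}` acting in `(q,p)` at fixed `y`, on functions of `(y,q,p)`. -/
def dz3 (d : ℕ) (k : Fin d)
    (g : (Fin d → ℝ) × (Fin d → ℝ) × (Fin d → ℝ) → ℂ)
    (w : (Fin d → ℝ) × (Fin d → ℝ) × (Fin d → ℝ)) : ℂ :=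
  fderiv ℝ g w (0, Pi.single k 1, 0) - Complex.I * fderiv ℝ g w (0, 0, Pi.single k 1)

open scoped SchwartzMap ContDiff

theorem temperate_fderiv {E F : Type*} [NormedAddCommGroup E] [NormedSpace ℝ E]
    [NormedAddCommGroup F] [NormedSpace ℝ F] {f : E → F} (hf : f.HasTemperateGrowth) :
    (fderiv ℝ f).HasTemperateGrowth := by
  refine ⟨hf.1.fderiv_right (by simp), fun n => ?_⟩
  obtain ⟨k, C, h⟩ := hf.2 (n + 1)
  exact ⟨k, C, fun y => by simpa [norm_iteratedFDeriv_fderiv] using h y⟩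

theorem temperate_fderiv_apply {E F : Type*} [NormedAddCommGroup E] [NormedSpace ℝ E]
    [NormedAddCommGroup F] [NormedSpace ℝ F] {f : E → F} (hf : f.HasTemperateGrowth) (v : E) :
    (fun w => fderiv ℝ f w v).HasTemperateGrowth :=
  (ContinuousLinearMap.apply ℝ F v).hasTemperateGrowth.comp (temperate_fderiv hf)

/-- being (the function underlying) a Schwartz map -/
def IsSchw {E : Type*} [NormedAddCommGroup E] [NormedSpace ℝ E] (f : E → ℂ) : Prop :=
  ∃ F : 𝓢(E, ℂ), ∀ w, F w = f w

section
variable {E : Type*} [NormedAddCommGroup E] [NormedSpace ℝ E]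

theorem IsSchw.diff {f : E → ℂ} (hf : IsSchw f) : Differentiable ℝ f := by
  obtain ⟨F, hF⟩ := hf
  rw [show f = F from funext fun w => (hF w).symm]
  exact F.differentiable

theorem IsSchw.mul_temp {f g : E → ℂ} (hf : IsSchw f) (hg : g.HasTemperateGrowth) :
    IsSchw (fun w => f w * g w) := by
  obtain ⟨F, hF⟩ := hf
  exact ⟨SchwartzMap.smulLeftCLM ℂ g F, fun w => by simp [hg, hF, mul_comm]⟩

theorem IsSchw.sub {f g : E → ℂ} (hf : IsSchw f) (hg : IsSchw g) :
    IsSchw (fun w => f w - g w) := by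
  obtain ⟨F, hF⟩ := hf
  obtain ⟨H, hH⟩ := hg
  exact ⟨F - H, fun w => by simp [hF, hH]⟩

theorem IsSchw.add {f g : E → ℂ} (hf : IsSchw f) (hg : IsSchw g) :
    IsSchw (fun w => f w + g w) := by
  obtain ⟨F, hF⟩ := hf
  obtain ⟨H, hH⟩ := hg
  exact ⟨F + H, fun w => by simp [hF, hH]⟩

theorem IsSchw.const_mul {f : E → ℂ} (hf : IsSchw f) (c : ℂ) :
    IsSchw (fun w => c * f w) := by
  obtain ⟨F, hF⟩ := hf
  exact ⟨c • F, fun w => by simp [hF]⟩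

theorem IsSchw.fderiv_apply {f : E → ℂ} (hf : IsSchw f) (v : E) :
    IsSchw (fun w => fderiv ℝ f w v) := by
  obtain ⟨F, hF⟩ := hf
  rw [show f = F from funext fun w => (hF w).symm]
  exact ⟨(SchwartzMap.fderivCLM ℝ E ℂ F).postcompCLM (ContinuousLinearMap.apply ℝ ℂ v),
    fun w => by simp⟩

theorem IsSchw.sum {ι : Type*} (s : Finset ι) {f : ι → E → ℂ} (hf : ∀ i, IsSchw (f i)) :
    IsSchw (fun w => ∑ i ∈ s, f i w) := by
  classical
  induction s using Finset.induction_on with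
  | empty => exact ⟨0, fun w => by simp⟩
  | insert a s has ih => simpa [Finset.sum_insert has] using (hf a).add ih

variable [MeasurableSpace E] [BorelSpace E] [FiniteDimensional ℝ E]
  {μ : Measure E} [μ.IsAddHaarMeasure]

theorem IsSchw.integrable_mul {f e : E → ℂ} (hf : IsSchw f) (he : Continuous e)
    (hb : ∀ w, ‖e w‖ ≤ 1) : Integrable (fun w => f w * e w) μ := by
  obtain ⟨F, hF⟩ := hf
  rw [show f = F from funext fun w => (hF w).symm]
  exact (F.integrable (μ := μ)).mul_bdd (c := 1) he.aestronglyMeasurable (.of_forall hb)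

theorem ibp_exp {f φ : E → ℂ} (hf : IsSchw f) (hφ : φ.HasTemperateGrowth)
    (hb : ∀ w, ‖Complex.exp (φ w)‖ ≤ 1) (v : E) :
    ∫ w, f w * fderiv ℝ φ w v * Complex.exp (φ w) ∂μ
      = - ∫ w, fderiv ℝ f w v * Complex.exp (φ w) ∂μ := by
  have hd : Differentiable ℝ φ := hφ.1.differentiable (by simp)
  have hc : Continuous fun w => Complex.exp (φ w) := Complex.continuous_exp.comp hd.continuous
  have hde : ∀ w, fderiv ℝ (fun w => Complex.exp (φ w)) w v
      = fderiv ℝ φ w v * Complex.exp (φ w) := by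
    intro w
    rw [((hd w).hasFDerivAt.cexp).fderiv]
    simp [mul_comm]
  have := integral_mul_fderiv_eq_neg_fderiv_mul_of_integrable (μ := μ) (f := f)
    (g := fun w => Complex.exp (φ w)) (v := v)
    ((hf.fderiv_apply v).integrable_mul hc hb)
    (by
      simp only [hde, ← mul_assoc]
      exact (hf.mul_temp (temperate_fderiv_apply hφ v)).integrable_mul hc hb)
    (hf.integrable_mul hc hb) (fun w _ => hf.diff w) (fun w _ => (hd w).cexp)
  simpa only [hde, ← mul_assoc] using this

end

instance haar_triple (d : ℕ) :
    (volume : Measure ((Fin d → ℝ) × (Fin d → ℝ) × (Fin d → ℝ))).IsAddHaarMeasure := by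
  have h : (volume : Measure ((Fin d → ℝ) × (Fin d → ℝ))).IsAddHaarMeasure :=
    Measure.prod.instIsAddHaarMeasure _ _
  exact Measure.prod.instIsAddHaarMeasure _ _

theorem IsSchw.dz3 {d : ℕ} {f : (Fin d → ℝ) × (Fin d → ℝ) × (Fin d → ℝ) → ℂ} (hf : IsSchw f)
    (k : Fin d) : IsSchw (dz3 d k f) :=
  (hf.fderiv_apply _).sub ((hf.fderiv_apply _).const_mul _)

theorem ibp_dz3 {d : ℕ} {f φ : (Fin d → ℝ) × (Fin d → ℝ) × (Fin d → ℝ) → ℂ} (hf : IsSchw f)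
    (hφ : φ.HasTemperateGrowth) (hb : ∀ w, ‖Complex.exp (φ w)‖ ≤ 1) (k : Fin d) :
    ∫ w, f w * dz3 d k φ w * Complex.exp (φ w)
      = - ∫ w, dz3 d k f w * Complex.exp (φ w) := by
  have hd : Differentiable ℝ φ := hφ.1.differentiable (by simp)
  have hc : Continuous fun w => Complex.exp (φ w) := Complex.continuous_exp.comp hd.continuous
  have h1 := ibp_exp (μ := volume) hf hφ hb (0, Pi.single k 1, 0)
  have h2 := ibp_exp (μ := volume) hf hφ hb (0, 0, Pi.single k 1)
  have i1 := (hf.mul_temp (temperate_fderiv_apply hφ (0, Pi.single k 1, 0))).integrable_mul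
    (μ := volume) hc hb
  have i2 := (hf.mul_temp (temperate_fderiv_apply hφ (0, 0, Pi.single k 1))).integrable_mul
    (μ := volume) hc hb
  have i3 := (hf.fderiv_apply (0, Pi.single k 1, 0)).integrable_mul (μ := volume) hc hb
  have i4 := (hf.fderiv_apply (0, 0, Pi.single k 1)).integrable_mul (μ := volume) hc hb
  calc _ = ∫ w, (f w * fderiv ℝ φ w (0, Pi.single k 1, 0) * Complex.exp (φ w)
            - Complex.I * (f w * fderiv ℝ φ w (0, 0, Pi.single k 1) * Complex.exp (φ w))) := by
          congr 1; ext w; simp only [_root_.dz3]; ring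
    _ = - (∫ w, (fderiv ℝ f w (0, Pi.single k 1, 0) * Complex.exp (φ w)
            - Complex.I * (fderiv ℝ f w (0, 0, Pi.single k 1) * Complex.exp (φ w)))) := by
          rw [integral_sub i1 (i2.const_mul _), integral_sub i3 (i4.const_mul _),
            integral_const_mul, integral_const_mul, h1, h2]
          ring
    _ = _ := by
          congr 2; ext w; simp only [_root_.dz3]; ring

/-- the key lemma, abstract form -/
theorem key_K {d : ℕ} {φ : (Fin d → ℝ) × (Fin d → ℝ) × (Fin d → ℝ) → ℂ}
    (hφ : φ.HasTemperateGrowth) (hb : ∀ w, ‖Complex.exp (φ w)‖ ≤ 1) (ε : ℂ)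
    {W : (Fin d → ℝ) × (Fin d → ℝ) × (Fin d → ℝ) → Fin d → ℂ}
    {A : (Fin d → ℝ) × (Fin d → ℝ) × (Fin d → ℝ) → Matrix (Fin d) (Fin d) ℂ}
    (hA : ∀ j k, (fun w => A w j k).HasTemperateGrowth)
    (hW : ∀ w j, W w j = ε * ∑ n, A w j n * dz3 d n φ w)
    {f : (Fin d → ℝ) × (Fin d → ℝ) × (Fin d → ℝ) → ℂ} (hf : IsSchw f) (j : Fin d) :
    ∫ w, f w * W w j * Complex.exp (φ w)
      = - ε * ∑ n, ∫ w, dz3 d n (fun w' => f w' * A w' j n) w * Complex.exp (φ w) := by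
  have hd : Differentiable ℝ φ := hφ.1.differentiable (by simp)
  have hc : Continuous fun w => Complex.exp (φ w) := Complex.continuous_exp.comp hd.continuous
  have ht : ∀ n, (dz3 d n φ).HasTemperateGrowth := fun n =>
    (temperate_fderiv_apply hφ _).sub ((Function.HasTemperateGrowth.const Complex.I).mul
      (temperate_fderiv_apply hφ _))
  calc _ = ∫ w, ε * ∑ n, (f w * A w j n) * dz3 d n φ w * Complex.exp (φ w) := by
          congr 1; ext w; rw [hW, ← Finset.sum_mul]; simp only [Finset.mul_sum, Finset.sum_mul]
          exact Finset.sum_congr rfl fun n _ => by ring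
    _ = ε * ∑ n, ∫ w, (f w * A w j n) * dz3 d n φ w * Complex.exp (φ w) := by
          rw [integral_const_mul, integral_finsetSum]
          exact fun n _ => ((hf.mul_temp (hA j n)).mul_temp (ht n)).integrable_mul hc hb
    _ = _ := by
          simp only [ibp_dz3 (hf.mul_temp (hA j _)) hφ hb, Finset.sum_neg_distrib]
          ring

theorem temperate_phase (d : ℕ) (x : Fin d → ℝ)
    (S : (Fin d → ℝ) × (Fin d → ℝ) → ℝ)
    (Q P : (Fin d → ℝ) × (Fin d → ℝ) → Fin d → ℝ)
    (hS : Function.HasTemperateGrowth S)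
    (hQ : Function.HasTemperateGrowth Q) (hP : Function.HasTemperateGrowth P) :
    (FGAphase d x S Q P).HasTemperateGrowth := by
  have h2 : (fun w : (Fin d → ℝ) × (Fin d → ℝ) × (Fin d → ℝ) => (w.2.1, w.2.2)).HasTemperateGrowth :=
    (ContinuousLinearMap.snd ℝ (Fin d → ℝ) ((Fin d → ℝ) × (Fin d → ℝ))).hasTemperateGrowth
  have hpr (j : Fin d) : (fun v : Fin d → ℝ => v j).HasTemperateGrowth :=
    (ContinuousLinearMap.proj (R := ℝ) (φ := fun _ : Fin d => ℝ) j).hasTemperateGrowth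
  have hy (j : Fin d) : (fun w : (Fin d → ℝ) × (Fin d → ℝ) × (Fin d → ℝ) =>
      w.1 j).HasTemperateGrowth := (hpr j).comp
    (ContinuousLinearMap.fst ℝ (Fin d → ℝ) ((Fin d → ℝ) × (Fin d → ℝ))).hasTemperateGrowth
  have hq (j : Fin d) : (fun w : (Fin d → ℝ) × (Fin d → ℝ) × (Fin d → ℝ) =>
      w.2.1 j).HasTemperateGrowth := (hpr j).comp
    ((ContinuousLinearMap.fst ℝ (Fin d → ℝ) (Fin d → ℝ)).hasTemperateGrowth.comp h2)
  have hp (j : Fin d) : (fun w : (Fin d → ℝ) × (Fin d → ℝ) × (Fin d → ℝ) =>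
      w.2.2 j).HasTemperateGrowth := (hpr j).comp
    ((ContinuousLinearMap.snd ℝ (Fin d → ℝ) (Fin d → ℝ)).hasTemperateGrowth.comp h2)
  have hS' := hS.comp h2
  have hQ' (j : Fin d) := (hpr j).comp (hQ.comp h2)
  have hP' (j : Fin d) := (hpr j).comp (hP.comp h2)
  simp only [Function.comp_def] at hS' hQ' hP'
  have cr {f : (Fin d → ℝ) × (Fin d → ℝ) × (Fin d → ℝ) → ℝ} (hf : f.HasTemperateGrowth) :
      (fun w => (f w : ℂ)).HasTemperateGrowth := Complex.ofRealCLM.hasTemperateGrowth.comp hf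
  unfold FGAphase
  refine .fun_sub (.fun_add (.fun_add (.fun_add (cr hS') (.fun_mul (.const _) (cr (.sum fun j _ => ?_))))
    (cr (.sum fun j _ => ?_))) (.fun_mul (.const _) (cr (.sum fun j _ => ?_))))
    (cr (.sum fun j _ => ?_))
  · exact .fun_pow (.fun_sub (.const _) (hQ' j)) 2
  · exact .fun_mul (hP' j) (.fun_sub (.const _) (hQ' j))
  · exact .fun_pow (.fun_sub (hy j) (hq j)) 2
  · exact .fun_mul (hp j) (.fun_sub (hy j) (hq j))

theorem norm_exp_phase (d : ℕ) (ε : ℝ) (hε : 0 < ε) (x : Fin d → ℝ)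
    (S : (Fin d → ℝ) × (Fin d → ℝ) → ℝ)
    (Q P : (Fin d → ℝ) × (Fin d → ℝ) → Fin d → ℝ)
    (w : (Fin d → ℝ) × (Fin d → ℝ) × (Fin d → ℝ)) :
    ‖Complex.exp (Complex.I * FGAphase d x S Q P w / (ε : ℂ))‖ ≤ 1 := by
  rw [Complex.norm_exp, Real.exp_le_one_iff, Complex.div_ofReal_re]
  refine div_nonpos_of_nonpos_of_nonneg ?_ hε.le
  have him : (FGAphase d x S Q P w).im = (∑ j, (x j - Q (w.2.1, w.2.2) j) ^ 2) / 2
      + (∑ j, (w.1 j - w.2.1 j) ^ 2) / 2 := by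
    unfold FGAphase
    simp only [Complex.sub_im, Complex.add_im, Complex.mul_im, Complex.ofReal_im,
      Complex.ofReal_re]
    simp
    ring
  rw [Complex.mul_re, him]
  simp only [Complex.I_re, Complex.I_im, zero_mul, one_mul, zero_sub, neg_nonpos]
  positivity

/-- the second-order integration by parts lemma of the frozen Gaussian
approximation: `∫ (x−Q)·G(x−Q) e^{iΦ/ε}
  = ∫ [ε Σ (∂_{z_n}Q_j) G_{jk} Z⁻¹_{kn} + ε² Σ ∂_{z_r}(∂_{z_n}(G_{jk}Z⁻¹_{kn}) Z⁻¹_{jr})] e^{iΦ/ε}`. -/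
theorem stmt_5 (d : ℕ) (hd : 1 ≤ d) (ε : ℝ) (hε : 0 < ε) (x : Fin d → ℝ)
    (S : (Fin d → ℝ) × (Fin d → ℝ) → ℝ)
    (Q P : (Fin d → ℝ) × (Fin d → ℝ) → Fin d → ℝ)
    (hS : Function.HasTemperateGrowth S)
    (hQ : Function.HasTemperateGrowth Q) (hP : Function.HasTemperateGrowth P)
    (hZPhi : ∀ y q p : Fin d → ℝ, ∀ k : Fin d,
      Complex.I * dz3 d k (FGAphase d x S Q P) (y, q, p)
        = ∑ j, Zentry d Q P (q, p) k j * (((x j : ℝ) : ℂ) - ((Q (q, p) j : ℝ) : ℂ)))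
    (hZinv : ∀ w : (Fin d → ℝ) × (Fin d → ℝ),
      IsUnit (Matrix.of (fun k j => Zentry d Q P w k j) : Matrix (Fin d) (Fin d) ℂ))
    (Zinv : (Fin d → ℝ) × (Fin d → ℝ) → Matrix (Fin d) (Fin d) ℂ)
    (hZinvL : ∀ w, Zinv w * Matrix.of (fun k j => Zentry d Q P w k j) = 1)
    (hZinvR : ∀ w, Matrix.of (fun k j => Zentry d Q P w k j) * Zinv w = 1)
    (hZinvTemp : ∀ j k : Fin d, Function.HasTemperateGrowth (fun w => Zinv w j k))
    (G : SchwartzMap ((Fin d → ℝ) × (Fin d → ℝ) × (Fin d → ℝ)) (Fin d → Fin d → ℂ)) :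
    (∫ w : (Fin d → ℝ) × (Fin d → ℝ) × (Fin d → ℝ),
        (∑ j, ∑ k, (((x j : ℝ) : ℂ) - ((Q (w.2.1, w.2.2) j : ℝ) : ℂ)) * G w j k
            * (((x k : ℝ) : ℂ) - ((Q (w.2.1, w.2.2) k : ℝ) : ℂ)))
          * Complex.exp (Complex.I * FGAphase d x S Q P w / (ε : ℂ)))
    = ∫ w : (Fin d → ℝ) × (Fin d → ℝ) × (Fin d → ℝ),
        ((ε : ℂ) * (∑ j, ∑ k, ∑ n,
            dzQ d Q (w.2.1, w.2.2) n j * G w j k * Zinv (w.2.1, w.2.2) k n)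
          + (ε : ℂ) ^ 2 * (∑ j, ∑ k, ∑ n, ∑ r,
            dz3 d r (fun w' =>
                dz3 d n (fun w'' => G w'' j k * Zinv (w''.2.1, w''.2.2) k n) w'
                  * Zinv (w'.2.1, w'.2.2) j r) w))
          * Complex.exp (Complex.I * FGAphase d x S Q P w / (ε : ℂ)) := by
  set φ : (Fin d → ℝ) × (Fin d → ℝ) × (Fin d → ℝ) → ℂ :=
    fun w => Complex.I * FGAphase d x S Q P w / (ε : ℂ) with hφdef
  have hΦ := temperate_phase d x S Q P hS hQ hP
  have hφ' : φ = fun w => (Complex.I / ε) * FGAphase d x S Q P w := by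
    ext w; simp only [hφdef]; ring
  have hφ : φ.HasTemperateGrowth := by
    rw [hφ']; exact .fun_mul (.const _) hΦ
  have hb : ∀ w, ‖Complex.exp (φ w)‖ ≤ 1 := norm_exp_phase d ε hε x S Q P
  have hε0 : (ε : ℂ) ≠ 0 := by exact_mod_cast hε.ne'
  have hd : Differentiable ℝ φ := hφ.1.differentiable (by simp)
  have hΦd : Differentiable ℝ (FGAphase d x S Q P) := hΦ.1.differentiable (by simp)
  have hc : Continuous fun w => Complex.exp (φ w) := Complex.continuous_exp.comp hd.continuous
  set W : (Fin d → ℝ) × (Fin d → ℝ) × (Fin d → ℝ) → Fin d → ℂ :=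
    fun w j => ((x j : ℝ) : ℂ) - ((Q (w.2.1, w.2.2) j : ℝ) : ℂ) with hWdef
  set A : (Fin d → ℝ) × (Fin d → ℝ) × (Fin d → ℝ) → Matrix (Fin d) (Fin d) ℂ :=
    fun w => Zinv (w.2.1, w.2.2) with hAdef
  have h2 : (fun w : (Fin d → ℝ) × (Fin d → ℝ) × (Fin d → ℝ) =>
      (w.2.1, w.2.2)).HasTemperateGrowth :=
    (ContinuousLinearMap.snd ℝ (Fin d → ℝ) ((Fin d → ℝ) × (Fin d → ℝ))).hasTemperateGrowth
  have hA : ∀ j k, (fun w => A w j k).HasTemperateGrowth := fun j k => (hZinvTemp j k).comp h2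
  have hQj (j : Fin d) : (fun v => ((Q v j : ℝ) : ℂ)).HasTemperateGrowth :=
    Complex.ofRealCLM.hasTemperateGrowth.comp
      ((ContinuousLinearMap.proj (R := ℝ) (φ := fun _ : Fin d => ℝ) j).hasTemperateGrowth.comp hQ)
  have hWt (j : Fin d) : (fun w => W w j).HasTemperateGrowth :=
    .fun_sub (.const _) ((hQj j).comp h2)
  have hdzφ : ∀ w n, (ε : ℂ) * dz3 d n φ w = ∑ j, Zentry d Q P (w.2.1, w.2.2) n j * W w j := by
    intro w n
    rw [← hZPhi w.1 w.2.1 w.2.2 n]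
    simp only [dz3, hφ']
    rw [fderiv_const_mul (hΦd w)]
    simp only [ContinuousLinearMap.smul_apply, smul_eq_mul]
    field_simp
  have hW : ∀ w j, W w j = ε * ∑ n, A w j n * dz3 d n φ w := by
    intro w j
    have h1 : (A w).mulVec ((Matrix.of fun k j => Zentry d Q P (w.2.1, w.2.2) k j).mulVec (W w))
        = W w := by
      rw [Matrix.mulVec_mulVec, hZinvL, Matrix.one_mulVec]
    rw [← congrFun h1 j]
    simp only [Matrix.mulVec, dotProduct, Matrix.of_apply, ← hdzφ, Finset.mul_sum]
    exact Finset.sum_congr rfl fun n _ => by ring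
  have hG (j k : Fin d) : IsSchw (fun w => G w j k) :=
    ⟨G.postcompCLM ((ContinuousLinearMap.proj (R := ℝ) (φ := fun _ : Fin d => ℂ) k).comp
      (ContinuousLinearMap.proj (R := ℝ) (φ := fun _ : Fin d => Fin d → ℂ) j)), fun w => by simp⟩
  have hdW : ∀ w j n, dz3 d n (fun w => W w j) w = - dzQ d Q (w.2.1, w.2.2) n j := by
    intro w j n
    have hq : DifferentiableAt ℝ (fun v => ((Q v j : ℝ) : ℂ)) (w.2.1, w.2.2) :=
      ((hQj j).1.differentiable (by simp)) _
    have hcomp : HasFDerivAt (fun w : (Fin d → ℝ) × (Fin d → ℝ) × (Fin d → ℝ) => W w j)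
        (-((fderiv ℝ (fun v => ((Q v j : ℝ) : ℂ)) (w.2.1, w.2.2)).comp
          (ContinuousLinearMap.snd ℝ (Fin d → ℝ) ((Fin d → ℝ) × (Fin d → ℝ))))) w :=
      (hq.hasFDerivAt.comp w (ContinuousLinearMap.snd ℝ (Fin d → ℝ)
        ((Fin d → ℝ) × (Fin d → ℝ))).hasFDerivAt).const_sub _
    simp only [dz3, dzQ, hcomp.fderiv]
    simp
    ring
  have hprod : ∀ (j k n : Fin d) w, dz3 d n (fun w' => G w' j k * W w' j * A w' k n) w
      = - (dzQ d Q (w.2.1, w.2.2) n j * G w j k * A w k n)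
        + dz3 d n (fun w' => G w' j k * A w' k n) w * W w j := by
    intro j k n w
    have e : (fun w' => G w' j k * W w' j * A w' k n)
        = fun w' => (G w' j k * A w' k n) * W w' j := by ext; ring
    have d1 := ((hG j k).mul_temp (hA k n)).diff w
    have d2 : DifferentiableAt ℝ (fun w => W w j) w := ((hWt j).1.differentiable (by simp)) w
    have h3 : dz3 d n (fun w' => (G w' j k * A w' k n) * W w' j) w
        = (G w j k * A w k n) * dz3 d n (fun w => W w j) w
          + dz3 d n (fun w' => G w' j k * A w' k n) w * W w j := by
      simp only [dz3]
      rw [fderiv_fun_mul d1 d2]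
      simp
      ring
    rw [e, h3, hdW]
    ring
  have hGA (j k n : Fin d) : IsSchw (fun w => G w j k * A w k n) := (hG j k).mul_temp (hA k n)
  have hdQt (j n : Fin d) : (fun w : (Fin d → ℝ) × (Fin d → ℝ) × (Fin d → ℝ) =>
      dzQ d Q (w.2.1, w.2.2) n j).HasTemperateGrowth := by
    have : (fun v => dzQ d Q v n j).HasTemperateGrowth :=
      .fun_sub (temperate_fderiv_apply (hQj j) _)
        (.fun_mul (.const _) (temperate_fderiv_apply (hQj j) _))
    exact this.comp h2
  have hT1 (j k n : Fin d) : IsSchw (fun w => dzQ d Q (w.2.1, w.2.2) n j * G w j k * A w k n) := by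
    have := (hGA j k n).mul_temp (hdQt j n)
    convert this using 2
    ring
  have hT2 (j k n r : Fin d) : IsSchw (dz3 d r (fun w' =>
      dz3 d n (fun w'' => G w'' j k * A w'' k n) w' * A w' j r)) :=
    (((hGA j k n).dz3 n).mul_temp (hA j r)).dz3 r
  -- left side
  have hL : ∫ w, (∑ j, ∑ k, W w j * G w j k * W w k) * Complex.exp (φ w)
      = ∑ j, ∑ k, ∑ n, ((ε : ℂ) * (∫ w, dzQ d Q (w.2.1, w.2.2) n j * G w j k * A w k n
            * Complex.exp (φ w))
          + (ε : ℂ) ^ 2 * ∑ r, ∫ w, dz3 d r (fun w' =>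
              dz3 d n (fun w'' => G w'' j k * A w'' k n) w' * A w' j r) w
              * Complex.exp (φ w)) := by
    have hi (j k : Fin d) : IsSchw (fun w => G w j k * W w j * W w k) :=
      ((hG j k).mul_temp (hWt j)).mul_temp (hWt k)
    calc _ = ∫ w, ∑ j, ∑ k, G w j k * W w j * W w k * Complex.exp (φ w) := by
            congr 1; ext w; simp only [Finset.sum_mul]
            exact Finset.sum_congr rfl fun j _ => Finset.sum_congr rfl fun k _ => by ring
      _ = ∑ j, ∑ k, ∫ w, G w j k * W w j * W w k * Complex.exp (φ w) := by
            rw [integral_finsetSum]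
            · refine Finset.sum_congr rfl fun j _ => ?_
              rw [integral_finsetSum]
              exact fun k _ => (hi j k).integrable_mul hc hb
            · exact fun j _ => integrable_finsetSum _ fun k _ => (hi j k).integrable_mul hc hb
      _ = _ := by
            refine Finset.sum_congr rfl fun j _ => Finset.sum_congr rfl fun k _ => ?_
            rw [key_K hφ hb ε hA hW ((hG j k).mul_temp (hWt j)) k, Finset.mul_sum]
            refine Finset.sum_congr rfl fun n _ => ?_
            have hk := key_K hφ hb ε hA hW ((hGA j k n).dz3 n) j
            have : ∫ w, dz3 d n (fun w' => G w' j k * W w' j * A w' k n) w * Complex.exp (φ w)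
                = - (∫ w, dzQ d Q (w.2.1, w.2.2) n j * G w j k * A w k n * Complex.exp (φ w))
                  + ∫ w, dz3 d n (fun w' => G w' j k * A w' k n) w * W w j
                    * Complex.exp (φ w) := by
              rw [← integral_neg, ← integral_add]
              · congr 1; ext w; rw [hprod]; ring
              · exact ((hT1 j k n).integrable_mul hc hb).neg
              · exact (((hGA j k n).dz3 n).mul_temp (hWt j)).integrable_mul hc hb
            rw [this, hk]
            ring
  refine hL.trans ?_
  have hS1 (j k n : Fin d) := (hT1 j k n).const_mul (ε : ℂ)
  have hS2 (j k n : Fin d) := (IsSchw.sum Finset.univ (hT2 j k n)).const_mul ((ε : ℂ) ^ 2)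
  have hS3 (j k n : Fin d) := ((hS1 j k n).add (hS2 j k n)).integrable_mul (μ := volume) hc hb
  symm
  calc _ = ∫ w, ∑ j, ∑ k, ∑ n, ((ε : ℂ) * (dzQ d Q (w.2.1, w.2.2) n j * G w j k * A w k n)
          + (ε : ℂ) ^ 2 * ∑ r, dz3 d r (fun w' =>
              dz3 d n (fun w'' => G w'' j k * A w'' k n) w' * A w' j r) w)
              * Complex.exp (φ w) := by
        congr 1; ext w
        simp only [← Finset.sum_mul, Finset.sum_add_distrib, ← Finset.mul_sum]
        rfl
    _ = ∑ j, ∑ k, ∑ n, ∫ w, ((ε : ℂ) * (dzQ d Q (w.2.1, w.2.2) n j * G w j k * A w k n)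
          + (ε : ℂ) ^ 2 * ∑ r, dz3 d r (fun w' =>
              dz3 d n (fun w'' => G w'' j k * A w'' k n) w' * A w' j r) w)
              * Complex.exp (φ w) := by
        rw [integral_finsetSum]
        · refine Finset.sum_congr rfl fun j _ => ?_
          rw [integral_finsetSum]
          · refine Finset.sum_congr rfl fun k _ => ?_
            rw [integral_finsetSum]
            exact fun n _ => hS3 j k n
          · exact fun k _ => integrable_finsetSum _ fun n _ => hS3 j k n
        · exact fun j _ => integrable_finsetSum _ fun k _ =>
            integrable_finsetSum _ fun n _ => hS3 j k n
    _ = _ := by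
        refine Finset.sum_congr rfl fun j _ => Finset.sum_congr rfl fun k _ =>
          Finset.sum_congr rfl fun n _ => ?_
        rw [← integral_finsetSum _ fun r _ => (hT2 j k n r).integrable_mul hc hb,
          ← integral_const_mul, ← integral_const_mul, ← integral_add]
        · congr 1; ext w; rw [add_mul, ← Finset.sum_mul]; ring
        · exact ((hT1 j k n).integrable_mul hc hb).const_mul _
        · exact (integrable_finsetSum _ fun r _ =>
            (hT2 j k n r).integrable_mul hc hb).const_mul _
end
end

section
/- Let H : ℝ^d × ℝ^d → ℝ be smooth and let (Q,P) : [0,T] × ℝ^{2d} → ℝ^{2d} be the jointly smooth Hamiltonian flow with Hamiltonian H. Let φ = (φ_1,…,φ_d) : [0,T] × ℝ^d × ℝ^d → ℂ^d be smooth, satisfy the Liouville equation ∂_t φ + ∂_P H · ∂_Q φ − ∂_Q H · ∂_P φ = 0 componentwise on [0,T] × ℝ^{2d}, and have initial data φ_j(0, Q, P) = P_j + i Q_j for all (Q,P) ∈ ℝ^{2d}. Then for all t ∈ [0,T], (q,p) ∈ ℝ^{2d} and all indices k, j: (∂_{q_k} − i∂_{p_k}) Q_j(t,q,p) = (∂_{P_j}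 φ_k)(t, Q(t,q,p), P(t,q,p)) and (∂_{q_k} − i∂_{p_k}) P_j(t,q,p) = − (∂_{Q_j} φ_k)(t, Q(t,q,p), P(t,q,p)). -/
noncomputable section

section aux

theorem aux_two_le : (2 : WithTop ℕ∞) ≤ ((⊤ : ℕ∞) : WithTop ℕ∞) :=
  WithTop.coe_le_coe.2 (le_top : (2 : ℕ∞) ≤ ⊤)

variable {V : Type*} [NormedAddCommGroup V] [NormedSpace ℝ V]

theorem aux_curve {W : Type*} [NormedAddCommGroup W] [NormedSpace ℝ W] {f : ℝ × V → W} {t : ℝ} {z : V}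
    (hf : DifferentiableAt ℝ f (t, z)) :
    HasDerivAt (fun s => f (s, z)) (fderiv ℝ f (t, z) (1, 0)) t := by
  have h1 : HasDerivAt (fun s : ℝ => (s, z)) ((1 : ℝ), (0 : V)) t :=
    (hasDerivAt_id t).prodMk (hasDerivAt_const t z)
  exact hf.hasFDerivAt.comp_hasDerivAt t h1

theorem aux_slice {W : Type*} [NormedAddCommGroup W] [NormedSpace ℝ W] {f : ℝ × V → W} {t : ℝ} {z : V}
    (hf : DifferentiableAt ℝ f (t, z)) :
    HasFDerivAt (fun y => f (t, y)) ((fderiv ℝ f (t, z)).comp (ContinuousLinearMap.inr ℝ ℝ V)) z := by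
  exact hf.hasFDerivAt.comp z (hasFDerivAt_prodMk_right t z)

theorem aux_symp (ω : V →L[ℝ] V →L[ℝ] ℝ) (halt : ∀ u v, ω u v = - ω v u)
    (H : V → ℝ) (Φ : ℝ × V → V) (T : ℝ) (hH : ContDiff ℝ (⊤ : ℕ∞) H)
    (hΦ : ContDiff ℝ (⊤ : ℕ∞) Φ) (hΦ0 : ∀ z, Φ (0, z) = z)
    (hF : ∀ t ∈ Set.Icc (0:ℝ) T, ∀ z v, ω (fderiv ℝ Φ (t, z) (1, 0)) v = fderiv ℝ H (Φ (t, z)) v) :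
    ∀ t ∈ Set.Icc (0:ℝ) T, ∀ z u v,
      ω (fderiv ℝ Φ (t, z) (0, u)) (fderiv ℝ Φ (t, z) (0, v)) = ω u v := by
  intro t ht z u v
  have hD : Differentiable ℝ Φ := hΦ.differentiable (by simp)
  have hH' : Differentiable ℝ (fderiv ℝ H) :=
    (hH.fderiv_right (m := 1) (by rw [one_add_one_eq_two]; exact aux_two_le)).differentiable (by simp)
  have hD' : Differentiable ℝ (fderiv ℝ Φ) :=
    (hΦ.fderiv_right (m := 1) (by rw [one_add_one_eq_two]; exact aux_two_le)).differentiable (by simp)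
  have key : ∀ s ∈ Set.Icc (0:ℝ) T, ∀ u v, ω (fderiv ℝ (fderiv ℝ Φ) (s, z) (1, 0) (0, u)) v
      = fderiv ℝ (fderiv ℝ H) (Φ (s, z)) (fderiv ℝ Φ (s, z) (0, u)) v := by
    intro s hs u v
    have hsym : IsSymmSndFDerivAt ℝ Φ (s, z) :=
      hΦ.contDiffAt.isSymmSndFDerivAt (by simpa using aux_two_le)
    rw [hsym.eq]
    have e1 : HasFDerivAt (fun y => fderiv ℝ Φ (s, y)) _ z := aux_slice (hD' (s, z))
    have e2 := (ω.flip v).hasFDerivAt.comp z (e1.clm_apply (hasFDerivAt_const ((1:ℝ), (0:V)) z))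
    have e3 : HasFDerivAt (fun y => Φ (s, y)) _ z := aux_slice (hD (s, z))
    have e4 := ((hH' (Φ (s, z))).hasFDerivAt.comp z e3).clm_apply (hasFDerivAt_const v z)
    have e5 : (ω.flip v) ∘ (fun y => fderiv ℝ Φ (s, y) (1, 0))
        = fun y => (fderiv ℝ H ∘ fun y => Φ (s, y)) y v := by
      funext y
      simpa using hF s hs y v
    rw [e5] at e2
    have := congrArg (fun L => L u) (e2.unique e4)
    simpa using this
  have hsymH : ∀ x a b, fderiv ℝ (fderiv ℝ H) x a b = fderiv ℝ (fderiv ℝ H) x b a := by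
    intro x a b
    have hsym : IsSymmSndFDerivAt ℝ H x :=
      hH.contDiffAt.isSymmSndFDerivAt (by simpa using aux_two_le)
    exact hsym.eq a b
  have hder : ∀ s ∈ Set.Icc (0:ℝ) T, HasDerivAt (fun s => ω (fderiv ℝ Φ (s, z) (0, u)) (fderiv ℝ Φ (s, z) (0, v))) 0 s := by
    intro s hs
    have c : HasDerivAt (fun s => fderiv ℝ Φ (s, z)) _ s := aux_curve (hD' (s, z))
    have cu := c.clm_apply (hasDerivAt_const s ((0:ℝ), u))
    have cv := c.clm_apply (hasDerivAt_const s ((0:ℝ), v))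
    have := (ω.hasFDerivAt.comp_hasDerivAt s cu).clm_apply cv
    refine this.congr_deriv ?_
    simp only [map_zero, add_zero]
    rw [key s hs, Function.comp_apply, halt, key s hs, hsymH]
    ring
  have hc := constant_of_has_deriv_right_zero (a := 0) (b := T)
    (fun s hs => (hder s hs).continuousAt.continuousWithinAt)
    (fun s hs => (hder s ⟨hs.1, hs.2.le⟩).hasDerivWithinAt) t ht
  rw [hc]
  have hid : fderiv ℝ Φ (0, z) ∘L (ContinuousLinearMap.inr ℝ ℝ V) = ContinuousLinearMap.id ℝ V := by
    have := aux_slice (hD (0, z))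
    simp only [hΦ0] at this
    exact this.unique (hasFDerivAt_id z)
  have h0 : ∀ w, fderiv ℝ Φ (0, z) (0, w) = w := fun w => by
    simpa using congrArg (fun L => L w) hid
  rw [h0, h0]

theorem aux_main [FiniteDimensional ℝ V] (ω : V →L[ℝ] V →L[ℝ] ℝ) (halt : ∀ u v, ω u v = - ω v u)
    (hnd : ∀ u, (∀ v, ω u v = 0) → u = 0)
    (H : V → ℝ) (Φ : ℝ × V → V) (T : ℝ) (hH : ContDiff ℝ (⊤ : ℕ∞) H)
    (hΦ : ContDiff ℝ (⊤ : ℕ∞) Φ) (hΦ0 : ∀ z, Φ (0, z) = z)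
    (hF : ∀ t ∈ Set.Icc (0:ℝ) T, ∀ z v, ω (fderiv ℝ Φ (t, z) (1, 0)) v = fderiv ℝ H (Φ (t, z)) v)
    (f : ℝ × V → ℂ) (hf : Differentiable ℝ f)
    (hL : ∀ t ∈ Set.Icc (0:ℝ) T, ∀ z, fderiv ℝ f (t, Φ (t, z)) (1, fderiv ℝ Φ (t, z) (1, 0)) = 0)
    (a b : V) (hf0 : ∀ z, f (0, z) = ω a z - Complex.I * ω b z) :
    ∀ t ∈ Set.Icc (0:ℝ) T, ∀ z w, fderiv ℝ f (t, Φ (t, z)) (0, w) =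
      ω (fderiv ℝ Φ (t, z) (0, a)) w - Complex.I * ω (fderiv ℝ Φ (t, z) (0, b)) w := by
  intro t ht z w
  have hS := aux_symp ω halt H Φ T hH hΦ hΦ0 hF t ht z
  have hD : Differentiable ℝ Φ := hΦ.differentiable (by simp)
  have hconst : ∀ y, f (t, Φ (t, y)) = ω a y - Complex.I * ω b y := by
    intro y
    have hder : ∀ s ∈ Set.Icc (0:ℝ) T, HasDerivAt (fun s => f (s, Φ (s, y))) 0 s := by
      intro s hs
      have c := (hasDerivAt_id s).prodMk (aux_curve (hD (s, y)))
      have := (hf (s, Φ (s, y))).hasFDerivAt.comp_hasDerivAt s c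
      rwa [hL s hs y] at this
    have hc := constant_of_has_deriv_right_zero (a := 0) (b := T)
      (fun s hs => (hder s hs).continuousAt.continuousWithinAt)
      (fun s hs => (hder s ⟨hs.1, hs.2.le⟩).hasDerivWithinAt) t ht
    rw [hc, hΦ0, hf0]
  have hdiff : ∀ u, fderiv ℝ f (t, Φ (t, z)) (0, fderiv ℝ Φ (t, z) (0, u))
      = ω a u - Complex.I * ω b u := by
    intro u
    have e1 := (hasFDerivAt_const t z).prodMk (aux_slice (hD (t, z)))
    have e2 := (hf (t, Φ (t, z))).hasFDerivAt.comp z e1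
    have e3 : HasFDerivAt (fun y => ((ω a y : ℝ) : ℂ) - Complex.I * (ω b y : ℝ)) 
       (Complex.ofRealCLM.comp (ω a) - Complex.I • Complex.ofRealCLM.comp (ω b)) z :=
      (Complex.ofRealCLM.comp (ω a)).hasFDerivAt.sub
        ((Complex.ofRealCLM.comp (ω b)).hasFDerivAt.const_smul Complex.I)
    have e4 : f ∘ (fun y => (t, Φ (t, y))) = fun y => ((ω a y : ℝ) : ℂ) - Complex.I * (ω b y : ℝ) := by
      funext y; exact hconst y
    rw [e4] at e2
    simpa using congrArg (fun L => L u) (e2.unique e3)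
  obtain ⟨u, rfl⟩ : ∃ u, fderiv ℝ Φ (t, z) (0, u) = w := by
    have hinj : Function.Injective ((fderiv ℝ Φ (t, z) ∘L (ContinuousLinearMap.inr ℝ ℝ V)).toLinearMap) := by
      rw [injective_iff_map_eq_zero]
      intro u hu
      apply hnd
      intro v
      have hu' : fderiv ℝ Φ (t, z) (0, u) = 0 := by simpa using hu
      rw [← hS, hu']; simp
    obtain ⟨u, hu⟩ := LinearMap.surjective_of_injective hinj w
    exact ⟨u, by simpa using hu⟩
  rw [hdiff, hS, hS]

end aux

def auxOmega (d : ℕ) : ((Fin d → ℝ) × (Fin d → ℝ)) →L[ℝ] ((Fin d → ℝ) × (Fin d → ℝ)) →L[ℝ] ℝ :=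
  LinearMap.toContinuousBilinearMap (LinearMap.mk₂ ℝ
    (fun u v => ∑ j, (u.1 j * v.2 j - u.2 j * v.1 j))
    (by intro a b c; rw [← Finset.sum_add_distrib]; congr 1; ext j; simp; ring)
    (by intro a b c; rw [Finset.smul_sum]; congr 1; ext j; simp; ring)
    (by intro a b c; rw [← Finset.sum_add_distrib]; congr 1; ext j; simp; ring)
    (by intro a b c; rw [Finset.smul_sum]; congr 1; ext j; simp; ring))

theorem auxOmega_apply (d : ℕ) (u v : (Fin d → ℝ) × (Fin d → ℝ)) :
    auxOmega d u v = ∑ j, (u.1 j * v.2 j - u.2 j * v.1 j) := rfl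

theorem aux_expand {d : ℕ} {W : Type*} [AddCommGroup W] [Module ℝ W]
    (L : ((Fin d → ℝ) × (Fin d → ℝ)) →ₗ[ℝ] W) (v : (Fin d → ℝ) × (Fin d → ℝ)) :
    L v = ∑ j, (v.1 j • L (Pi.single j 1, 0) + v.2 j • L (0, Pi.single j 1)) := by
  conv_lhs => rw [show v = ∑ j, (v.1 j • ((Pi.single j 1, 0) : (Fin d → ℝ) × (Fin d → ℝ)) + v.2 j • ((0, Pi.single j 1) : (Fin d → ℝ) × (Fin d → ℝ))) by
    ext i <;> simp [Prod.fst_sum, Prod.snd_sum, Finset.sum_apply, Pi.single_apply]]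
  simp only [map_sum, map_add, map_smul]


/-- Theorem 4.1 of the paper: if `φ` solves the Liouville equation with initial
datum `φ_j(0,Q,P) = P_j + iQ_j`, then along the Hamiltonian flow
`∂_{z_k}Q_j = (∂_{P_j}φ_k)(t,Q,P)` and `∂_{z_k}P_j = −(∂_{Q_j}φ_k)(t,Q,P)`,
where `∂_{z_k} = ∂_{q_k} − i∂_{p_k}` acts on the Lagrangian parameters. -/
theorem stmt_8 (d : ℕ) (T : ℝ) (hT : 0 < T)
    (H : (Fin d → ℝ) × (Fin d → ℝ) → ℝ)
    (Q P : ℝ × (Fin d → ℝ) × (Fin d → ℝ) → Fin d → ℝ)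
    (φ : ℝ × (Fin d → ℝ) × (Fin d → ℝ) → Fin d → ℂ)
    (hH : ContDiff ℝ (⊤ : ℕ∞) H)
    (hQ : ContDiff ℝ (⊤ : ℕ∞) Q) (hP : ContDiff ℝ (⊤ : ℕ∞) P) (hφ : ContDiff ℝ (⊤ : ℕ∞) φ)
    (hQt : ∀ t ∈ Set.Icc (0:ℝ) T, ∀ q p : Fin d → ℝ, ∀ j : Fin d,
      fderiv ℝ Q (t, q, p) (1, 0, 0) j
        = fderiv ℝ H (Q (t, q, p), P (t, q, p)) (0, Pi.single j 1))
    (hPt : ∀ t ∈ Set.Icc (0:ℝ) T, ∀ q p : Fin d → ℝ, ∀ j : Fin d,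
      fderiv ℝ P (t, q, p) (1, 0, 0) j
        = - fderiv ℝ H (Q (t, q, p), P (t, q, p)) (Pi.single j 1, 0))
    (hQ0 : ∀ q p : Fin d → ℝ, Q (0, q, p) = q)
    (hP0 : ∀ q p : Fin d → ℝ, P (0, q, p) = p)
    (hLiouville : ∀ t ∈ Set.Icc (0:ℝ) T, ∀ a b : Fin d → ℝ, ∀ j : Fin d,
      fderiv ℝ (fun v => φ v j) (t, a, b) (1, 0, 0)
        + ∑ l, ((fderiv ℝ H (a, b) (0, Pi.single l 1) : ℝ) : ℂ)
            * fderiv ℝ (fun v => φ v j) (t, a, b) (0, Pi.single l 1, 0)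
        - ∑ l, ((fderiv ℝ H (a, b) (Pi.single l 1, 0) : ℝ) : ℂ)
            * fderiv ℝ (fun v => φ v j) (t, a, b) (0, 0, Pi.single l 1) = 0)
    (hφ0 : ∀ a b : Fin d → ℝ, ∀ j : Fin d,
      φ (0, a, b) j = ((b j : ℝ) : ℂ) + Complex.I * ((a j : ℝ) : ℂ)) :
    ∀ t ∈ Set.Icc (0:ℝ) T, ∀ q p : Fin d → ℝ, ∀ k j : Fin d,
      (((fderiv ℝ Q (t, q, p) (0, Pi.single k 1, 0) j : ℝ) : ℂ)
          - Complex.I * ((fderiv ℝ Q (t, q, p) (0, 0, Pi.single k 1) j : ℝ) : ℂ)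
        = fderiv ℝ (fun v => φ v k) (t, Q (t, q, p), P (t, q, p)) (0, 0, Pi.single j 1))
      ∧ (((fderiv ℝ P (t, q, p) (0, Pi.single k 1, 0) j : ℝ) : ℂ)
          - Complex.I * ((fderiv ℝ P (t, q, p) (0, 0, Pi.single k 1) j : ℝ) : ℂ)
        = - fderiv ℝ (fun v => φ v k) (t, Q (t, q, p), P (t, q, p)) (0, Pi.single j 1, 0)) := by


  have hΦ : ContDiff ℝ (⊤ : ℕ∞) (fun x => (Q x, P x)) := hQ.prodMk hP
  have hfd : ∀ x v, fderiv ℝ (fun x => (Q x, P x)) x v = (fderiv ℝ Q x v, fderiv ℝ P x v) := by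
    intro x v
    rw [DifferentiableAt.fderiv_prodMk (hQ.differentiable (by simp) x)
      (hP.differentiable (by simp) x)]
    rfl
  intro t ht q p k j
  have hmain := aux_main (auxOmega d)
    (by intro u v; rw [auxOmega_apply, auxOmega_apply, ← Finset.sum_neg_distrib]
        congr 1; ext j; ring)
    (by intro u hu
        ext j
        · simpa [auxOmega_apply, Pi.single_apply] using hu (0, Pi.single j 1)
        · simpa [auxOmega_apply, Pi.single_apply] using hu (Pi.single j 1, 0))
    H (fun x => (Q x, P x)) T hH hΦ (by rintro ⟨q, p⟩; simp [hQ0, hP0])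
    (by rintro t ht ⟨q, p⟩ v
        rw [hfd, auxOmega_apply]
        have := aux_expand (fderiv ℝ H (Q (t, q, p), P (t, q, p))).toLinearMap v
        simp only [ContinuousLinearMap.coe_coe] at this
        rw [this]
        congr 1; ext j
        have h1 := hQt t ht q p j
        have h2 := hPt t ht q p j
        simp only [Prod.mk_zero_zero] at h1 h2
        simp only [h1, h2, smul_eq_mul]
        ring)
    (fun v => φ v k) ((contDiff_pi.1 hφ k).differentiable (by simp))
    (by rintro t ht ⟨q, p⟩
        have hL := hLiouville t ht (Q (t, q, p)) (P (t, q, p)) k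
        set D := fderiv ℝ (fun v => φ v k) (t, Q (t, q, p), P (t, q, p)) with hDdef
        have := aux_expand (D ∘L ContinuousLinearMap.inr ℝ ℝ _).toLinearMap
          (fderiv ℝ Q (t, q, p) (1, 0), fderiv ℝ P (t, q, p) (1, 0))
        simp only [ContinuousLinearMap.coe_coe, ContinuousLinearMap.comp_apply,
          ContinuousLinearMap.inr_apply] at this
        rw [hfd]
        have hs : ∀ w, D (1, w) = D (1, 0) + D (0, w) := by
          intro w; rw [← map_add]; simp
        rw [hs, this, ← hL, add_sub_assoc, ← Finset.sum_sub_distrib]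
        congr 2; ext j
        have h1 := hQt t ht q p j
        have h2 := hPt t ht q p j
        simp only [Prod.mk_zero_zero] at h1 h2
        simp only [h1, h2, Complex.real_smul]
        push_cast
        ring)
    (Pi.single k 1, 0) (0, Pi.single k 1)
    (by rintro ⟨a, b⟩
        simp [hφ0, auxOmega_apply, Pi.single_apply])
    t ht (q, p)
  constructor
  · have := hmain (0, Pi.single j 1)
    rw [this, hfd, hfd]
    simp [auxOmega_apply, Pi.single_apply]
  · have := hmain (Pi.single j 1, 0)
    rw [this, hfd, hfd]
    simp [auxOmega_apply, Pi.single_apply]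
    ring
end
end
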